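/- For any planar simple graph G with maximum degree Δ(G) ≥ 12 and any integer k ≥ 1, the k-frugal choice number satisfies ch_k(G) ≤ ⌊(2·Δ(G) + 19)/k⌋ + 6. -/

import Mathlib

open SimpleGraph

/-- A drawing of a simple graph in the plane: vertices are mapped to distinct points,
edges to arcs (injective continuous curves parametrised on `[0,1]`) joining the images of
their endpoints, whose interiors avoid the vertex points and each other. -/
structure PlaneEmbedding {V : Type*} (G : SimpleGraph V) where
  pos : V → ℝ × ℝ
  inj : Function.Injective pos
  arc : G.edgeSet → ℝ → ℝ × ℝ
  arc_cont : ∀ e, ContinuousOn (arc e) (Set.Icc 0 1)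
  arc_inj : ∀ e, Set.InjOn (arc e) (Set.Icc 0 1)
  arc_ends : ∀ e : G.edgeSet, ∃ u v : V, (e : Sym2 V) = s(u, v) ∧
      arc e 0 = pos u ∧ arc e 1 = pos v
  arc_avoid : ∀ e : G.edgeSet, ∀ t ∈ Set.Ioo (0:ℝ) 1, arc e t ∉ Set.range pos
  arc_disjoint : ∀ e f : G.edgeSet, e ≠ f → ∀ s ∈ Set.Ioo (0:ℝ) 1, ∀ t ∈ Set.Ioo (0:ℝ) 1,
      arc e s ≠ arc f t

/-- A graph is planar if it admits a drawing in the plane. -/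
def SimpleGraph.IsPlanar {V : Type*} (G : SimpleGraph V) : Prop :=
  Nonempty (PlaneEmbedding G)

/-- A `k`-frugal colouring: a proper vertex colouring in which no colour appears more than
`k` times in the neighbourhood of any vertex. -/
def SimpleGraph.IsFrugalColoring {V α : Type*} (G : SimpleGraph V) (k : ℕ) (c : V → α) : Prop :=
  (∀ u v, G.Adj u v → c u ≠ c v) ∧
  ∀ (v : V) (a : α), {u | u ∈ G.neighborSet v ∧ c u = a}.ncard ≤ k

/-- The `k`-frugal choice number `ch_k(G)`: the least `t` such that any assignment of lists
of `t` integers to the vertices admits a `k`-frugal colouring from the lists. -/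
noncomputable def SimpleGraph.frugalChoiceNumber {V : Type*} (G : SimpleGraph V) (k : ℕ) : ℕ :=
  sInf {t : ℕ | ∀ L : V → Finset ℤ, (∀ v, (L v).card = t) →
    ∃ c : V → ℤ, (∀ v, c v ∈ L v) ∧ G.IsFrugalColoring k c}

/-- A mod 2 obstruction system for planarity. The value `χ u w` is a parity attached to the
direction from `w` to `u`, and `n e w` is the parity of the number of turns the edge `e` makes
around the vertex `w`; the relation says that two disjoint edges do not cross. -/
def SimpleGraph.HasTurnParity {V : Type*} (G : SimpleGraph V) : Prop :=
  ∃ (χ : V → V → ZMod 2) (n : Sym2 V → V → ZMod 2),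
    (∀ u w, u ≠ w → χ u w + χ w u = 1) ∧
    ∀ u v w x, G.Adj u v → G.Adj w x → u ≠ w → u ≠ x → v ≠ w → v ≠ x →
      n s(u, v) w + n s(u, v) x + n s(w, x) u + n s(w, x) v
        + χ u w + χ u x + χ v w + χ v x = 0

/-! ### From drawings to turn parities -/

lemma exists_continuous_log (f : C(ℝ × ℝ, ℂ)) (hf : ∀ a, f a ≠ 0) :
    ∃ L : ℝ × ℝ → ℂ, Continuous L ∧ ∀ a, Complex.exp (L a) = f a := by
  obtain ⟨F, ⟨-, hF⟩, -⟩ := Complex.isCoveringMapOn_exp.existsUnique_continuousMap_lifts f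
    (a₀ := (0, 0)) (e₀ := Complex.log (f (0, 0))) (Complex.exp_log (hf _)) (fun a ↦ hf a)
  exact ⟨F, F.continuous, fun a ↦ congrFun hF a⟩

lemma sub_eq_sub_of_exp_eq {L M : ℝ → ℂ} (hL : Continuous L) (hM : Continuous M)
    (h : ∀ t, Complex.exp (L t) = Complex.exp (M t)) (s t : ℝ) : L s - L t = M s - M t := by
  have hd : ∀ t, ∃ n : ℤ, (L t - M t) / (2 * Real.pi * Complex.I) = n := fun t ↦ by
    obtain ⟨n, hn⟩ := Complex.exp_eq_exp_iff_exists_int.1 (h t)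
    refine ⟨n, ?_⟩
    rw [hn]
    field_simp [Complex.two_pi_I_ne_zero]
    ring
  have hc : Continuous fun t ↦ (L t - M t) / (2 * Real.pi * Complex.I) := by fun_prop
  choose n hn using hd
  have hnc : Continuous n := by
    refine Int.isClosedEmbedding_coe_real.continuous_iff.2 ?_
    simpa only [hn, Complex.intCast_re, Function.comp_def] using Complex.continuous_re.comp hc
  have hst : n s = n t := PreconnectedSpace.constant inferInstance hnc
  have h1 := hn s
  have h2 := hn t
  rw [hst, ← h2, div_left_inj' Complex.two_pi_I_ne_zero] at h1
  linear_combination h1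

namespace PlaneEmbedding

variable {V : Type*} {G : SimpleGraph V} (P : PlaneEmbedding G)

/-- The position of a vertex as a complex number. -/
noncomputable def point (v : V) : ℂ := Complex.equivRealProd.symm (P.pos v)

/-- The arc of an edge as a curve in the complex plane, extended by constants. -/
noncomputable def curve (e : G.edgeSet) (t : ℝ) : ℂ :=
  Complex.equivRealProd.symm (P.arc e (Set.projIcc (0 : ℝ) 1 zero_le_one t))

lemma continuous_curve (e : G.edgeSet) : Continuous (P.curve e) := by
  have h := (P.arc_cont e).comp_continuous
    (continuous_subtype_val.comp (continuous_projIcc (a := (0 : ℝ)) (b := 1) (h := zero_le_one)))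
    fun t ↦ (Set.projIcc (0 : ℝ) 1 zero_le_one t).2
  exact Complex.equivRealProdCLM.symm.continuous.comp h

lemma point_injective : Function.Injective P.point :=
  Complex.equivRealProd.symm.injective.comp P.inj

lemma point_sub_ne_zero {u w : V} (h : u ≠ w) : P.point u - P.point w ≠ 0 :=
  sub_ne_zero.2 fun h' ↦ h (P.point_injective h')

lemma exists_ends (e : G.edgeSet) : ∃ u v : V, (e : Sym2 V) = s(u, v) ∧
    P.curve e 0 = P.point u ∧ P.curve e 1 = P.point v := by
  obtain ⟨u, v, h, h0, h1⟩ := P.arc_ends e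
  exact ⟨u, v, h, by simp [curve, point, h0], by simp [curve, point, h1]⟩

/-- A point of an edge curve is an endpoint or an interior point of the arc. -/
lemma curve_cases (e : G.edgeSet) (t : ℝ) :
    (∃ u ∈ (e : Sym2 V), P.curve e t = P.point u) ∨
      ∃ s ∈ Set.Ioo (0 : ℝ) 1, P.curve e t = Complex.equivRealProd.symm (P.arc e s) := by
  obtain ⟨u, v, h, h0, h1⟩ := P.arc_ends e
  obtain ⟨hs0, hs1⟩ := (Set.projIcc (0 : ℝ) 1 zero_le_one t).2
  rcases hs0.eq_or_lt with h2 | h2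
  · exact .inl ⟨u, by simp [h], by simp [curve, point, ← h2, h0]⟩
  rcases hs1.eq_or_lt with h3 | h3
  · exact .inl ⟨v, by simp [h], by simp [curve, point, h3, h1]⟩
  · exact .inr ⟨_, ⟨h2, h3⟩, rfl⟩

lemma curve_ne_point (e : G.edgeSet) {w : V} (hw : w ∉ (e : Sym2 V)) (t : ℝ) :
    P.curve e t ≠ P.point w := by
  rcases P.curve_cases e t with ⟨u, hu, h⟩ | ⟨s, hs, h⟩ <;> rw [h]
  · exact fun h' ↦ hw (P.point_injective h' ▸ hu)
  · exact fun h' ↦ P.arc_avoid e s hs ⟨w, (Complex.equivRealProd.symm.injective h').symm⟩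

lemma curve_ne_curve (e f : G.edgeSet) (hef : ∀ w ∈ (e : Sym2 V), w ∉ (f : Sym2 V)) (s t : ℝ) :
    P.curve e s ≠ P.curve f t := by
  rcases P.curve_cases e s with ⟨u, hu, h⟩ | ⟨s', hs, h⟩
  · rw [h]
    exact (P.curve_ne_point f (hef u hu) t).symm
  · rcases P.curve_cases f t with ⟨v, hv, h'⟩ | ⟨t', ht, h'⟩
    · rw [h']
      exact P.curve_ne_point e (fun hv' ↦ hef v hv' hv) s
    · rw [h, h']
      refine fun h'' ↦ P.arc_disjoint e f ?_ s' hs t' ht (Complex.equivRealProd.symm.injective h'')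
      rintro rfl
      obtain ⟨u, v, hu, -⟩ := P.arc_ends e
      exact hef u (by simp [hu]) (by simp [hu])

/-- The logarithm of the displacement from `w` to `u`. -/
noncomputable def logDiff (u w : V) : ℂ := Complex.log (P.point u - P.point w)

lemma exp_logDiff {u w : V} (h : u ≠ w) : Complex.exp (P.logDiff u w) = P.point u - P.point w :=
  Complex.exp_log (P.point_sub_ne_zero h)

/-- The number of turns of the edge `e` around a vertex `w` off the edge. -/
lemma exists_turns (e : G.edgeSet) {w : V} (hw : w ∉ (e : Sym2 V)) : ∃ n : ℤ, ∀ u v : V,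
    (e : Sym2 V) = s(u, v) → P.curve e 0 = P.point u → P.curve e 1 = P.point v →
    ∀ L : ℝ → ℂ, Continuous L → (∀ t, Complex.exp (L t) = P.curve e t - P.point w) →
      L 1 - L 0 = P.logDiff v w - P.logDiff u w + n * (2 * Real.pi * Complex.I) := by
  obtain ⟨M, hM, hMe⟩ := exists_continuous_log
    ⟨fun a ↦ P.curve e a.1 - P.point w, by have := P.continuous_curve e; fun_prop⟩
    fun a ↦ sub_ne_zero.2 (P.curve_ne_point e hw a.1)
  simp only [ContinuousMap.coe_mk] at hMe
  obtain ⟨a, b, hab, ha, hb⟩ := P.exists_ends e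
  have haw : a ≠ w := by rintro rfl; simp [hab] at hw
  have hbw : b ≠ w := by rintro rfl; simp [hab] at hw
  obtain ⟨m, hm⟩ := Complex.exp_eq_exp_iff_exists_int.1
    ((hMe (0, 0)).trans ((congrArg (· - P.point w) ha).trans (P.exp_logDiff haw).symm))
  obtain ⟨n, hn⟩ := Complex.exp_eq_exp_iff_exists_int.1
    ((hMe (1, 0)).trans ((congrArg (· - P.point w) hb).trans (P.exp_logDiff hbw).symm))
  refine ⟨n - m, fun u v _ hu hv L hL hLe ↦ ?_⟩
  obtain rfl : a = u := P.point_injective (ha.symm.trans hu)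
  obtain rfl : b = v := P.point_injective (hb.symm.trans hv)
  have h := sub_eq_sub_of_exp_eq hL (M := fun t ↦ M (t, 0)) (by fun_prop)
    (fun t ↦ (hLe t).trans (hMe (t, 0)).symm) 1 0
  rw [h, hm, hn]
  push_cast
  ring

/-- Opposite displacements have logarithms differing by an odd multiple of `π * I`. -/
lemma exists_logDiff_sub (u w : V) : ∃ m : ℤ, u ≠ w →
    P.logDiff u w - P.logDiff w u = (2 * m + 1) * (Real.pi * Complex.I) := by
  by_cases huw : u = w
  · exact ⟨0, fun h ↦ absurd huw h⟩
  have h : Complex.exp (P.logDiff u w) = Complex.exp (P.logDiff w u + Real.pi * Complex.I) := by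
    rw [Complex.exp_add, Complex.exp_pi_mul_I, P.exp_logDiff huw, P.exp_logDiff (Ne.symm huw)]
    ring
  obtain ⟨m, hm⟩ := Complex.exp_eq_exp_iff_exists_int.1 h
  exact ⟨m, fun _ ↦ by rw [hm]; ring⟩

end PlaneEmbedding

lemma SimpleGraph.IsPlanar.hasTurnParity {V : Type*} {G : SimpleGraph V} (hG : G.IsPlanar) :
    G.HasTurnParity := by
  classical
  obtain ⟨P⟩ := hG
  choose m hm using P.exists_logDiff_sub
  choose N hN using fun (e : G.edgeSet) (w : {w : V // w ∉ (e : Sym2 V)}) ↦ P.exists_turns e w.2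
  have hpi : (Real.pi * Complex.I : ℂ) ≠ 0 := by simp [Real.pi_ne_zero]
  let n : Sym2 V → V → ZMod 2 := fun e w ↦
    if h : e ∈ G.edgeSet ∧ w ∉ e then (N ⟨e, h.1⟩ ⟨w, h.2⟩ : ZMod 2) else 0
  have hn : ∀ (e : G.edgeSet) (w : V) (hw : w ∉ (e : Sym2 V)), n e w = (N e ⟨w, hw⟩ : ZMod 2) :=
    fun e w hw ↦ dif_pos ⟨e.2, hw⟩
  have key : ∀ (e f : G.edgeSet) (u v w x : V), (e : Sym2 V) = s(u, v) → (f : Sym2 V) = s(w, x) →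
      P.curve e 0 = P.point u → P.curve e 1 = P.point v →
      P.curve f 0 = P.point w → P.curve f 1 = P.point x → u ≠ w → u ≠ x → v ≠ w → v ≠ x →
      n e w + n e x + n f u + n f v + (m u w : ZMod 2) + (m u x : ZMod 2)
        + (m v w : ZMod 2) + (m v x : ZMod 2) = 0 := by
    intro e f u v w x he hf he0 he1 hf0 hf1 huw hux hvw hvx
    have hwe : w ∉ (e : Sym2 V) := by simp [he, huw.symm, hvw.symm]
    have hxe : x ∉ (e : Sym2 V) := by simp [he, hux.symm, hvx.symm]
    have huf : u ∉ (f : Sym2 V) := by simp [hf, huw, hux]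
    have hvf : v ∉ (f : Sym2 V) := by simp [hf, hvw, hvx]
    have hce := P.continuous_curve e
    have hcf := P.continuous_curve f
    obtain ⟨L, hL, hLe⟩ := exists_continuous_log ⟨fun a ↦ P.curve e a.1 - P.curve f a.2, by fun_prop⟩
      fun a ↦ sub_ne_zero.2 (P.curve_ne_curve e f
        (fun z hz hz' ↦ by
          rw [he, Sym2.mem_iff] at hz
          rcases hz with rfl | rfl
          · exact huf hz'
          · exact hvf hz') a.1 a.2)
    simp only [ContinuousMap.coe_mk] at hLe
    have e1 := hN e ⟨w, hwe⟩ u v he he0 he1 (fun s ↦ L (s, 0)) (by fun_prop)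
      fun s ↦ by rw [hLe, hf0]
    have e2 := hN e ⟨x, hxe⟩ u v he he0 he1 (fun s ↦ L (s, 1)) (by fun_prop)
      fun s ↦ by rw [hLe, hf1]
    have e3 := hN f ⟨u, huf⟩ w x hf hf0 hf1 (fun t ↦ L (0, t) + Real.pi * Complex.I) (by fun_prop)
      fun t ↦ by rw [Complex.exp_add, Complex.exp_pi_mul_I, hLe, he0]; ring
    have e4 := hN f ⟨v, hvf⟩ w x hf hf0 hf1 (fun t ↦ L (1, t) + Real.pi * Complex.I) (by fun_prop)
      fun t ↦ by rw [Complex.exp_add, Complex.exp_pi_mul_I, hLe, he1]; ring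
    rw [hn e w hwe, hn e x hxe, hn f u huf, hn f v hvf]
    generalize N e ⟨w, hwe⟩ = a at *
    generalize N e ⟨x, hxe⟩ = b at *
    generalize N f ⟨u, huf⟩ = c at *
    generalize N f ⟨v, hvf⟩ = d at *
    have h1 := hm u w huw
    have h2 := hm u x hux
    have h3 := hm v w hvw
    have h4 := hm v x hvx
    have hz : ((a - b + d - c + m v w - m u w - m v x + m u x : ℤ) : ℂ)
        * (2 * (Real.pi * Complex.I)) = 0 := by
      push_cast
      linear_combination -e1 + e2 + e3 - e4 + h1 - h2 - h3 + h4
    have hz' : a - b + d - c + m v w - m u w - m v x + m u x = 0 :=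
      Int.cast_eq_zero.1 ((mul_eq_zero.1 hz).resolve_right (mul_ne_zero two_ne_zero hpi))
    have hz2 : ((a + b + c + d + m u w + m u x + m v w + m v x : ℤ) : ZMod 2) = 0 := by
      rw [ZMod.intCast_zmod_eq_zero_iff_dvd]
      push_cast
      omega
    push_cast at hz2
    exact hz2
  refine ⟨fun u w ↦ (m u w : ZMod 2), n, fun u w huw ↦ ?_, ?_⟩
  · have h : ((2 * (m u w + m w u + 1) : ℤ) : ℂ) * (Real.pi * Complex.I) = 0 := by
      push_cast
      linear_combination -hm u w huw - hm w u huw.symm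
    have h' : m u w + m w u + 1 = 0 := by
      rcases mul_eq_zero.1 h with h | h
      · have := Int.cast_eq_zero.1 h
        omega
      · exact absurd h hpi
    have h2 : ((m u w + m w u - 1 : ℤ) : ZMod 2) = 0 := by
      rw [ZMod.intCast_zmod_eq_zero_iff_dvd]
      push_cast
      omega
    push_cast at h2
    exact sub_eq_zero.1 h2
  · intro u v w x huv hwx huw hux hvw hvx
    obtain ⟨u', v', he, he0, he1⟩ := P.exists_ends ⟨s(u, v), huv⟩
    obtain ⟨w', x', hf, hf0, hf1⟩ := P.exists_ends ⟨s(w, x), hwx⟩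
    have := key _ _ u' v' w' x' he hf he0 he1 hf0 hf1
    simp only [Sym2.eq_iff] at he hf
    rcases he with ⟨rfl, rfl⟩ | ⟨rfl, rfl⟩ <;> rcases hf with ⟨rfl, rfl⟩ | ⟨rfl, rfl⟩ <;>
      linear_combination this (by assumption) (by assumption) (by assumption) (by assumption)

/-! ### Closure under subgraphs and contractions, and excluded graphs -/

namespace SimpleGraph

variable {V : Type*} {G : SimpleGraph V}

lemma HasTurnParity.mono {H : SimpleGraph V} (hG : G.HasTurnParity) (h : H ≤ G) :
    H.HasTurnParity := by
  obtain ⟨χ, n, hχ, hn⟩ := hG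
  exact ⟨χ, n, hχ, fun u v w x huv hwx ↦ hn u v w x (h huv) (h hwx)⟩

/-- The graph obtained by contracting `v` into `u`, leaving `v` as an isolated vertex. -/
def contract (G : SimpleGraph V) (v u : V) : SimpleGraph V where
  Adj x y := x ≠ y ∧ x ≠ v ∧ y ≠ v ∧ (G.Adj x y ∨ x = u ∧ G.Adj v y ∨ y = u ∧ G.Adj v x)
  symm := ⟨fun x y h ↦ ⟨h.1.symm, h.2.2.1, h.2.1, by
    rcases h.2.2.2 with h | h | h
    exacts [.inl h.symm, .inr (.inr h), .inr (.inl h)]⟩⟩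
  loopless := ⟨fun x h ↦ h.1 rfl⟩

lemma contract_adj {v u x y : V} : (G.contract v u).Adj x y ↔
    x ≠ y ∧ x ≠ v ∧ y ≠ v ∧ (G.Adj x y ∨ x = u ∧ G.Adj v y ∨ y = u ∧ G.Adj v x) := Iff.rfl

lemma HasTurnParity.contract (hG : G.HasTurnParity) {v u : V} (huv : G.Adj u v) :
    (G.contract v u).HasTurnParity := by
  classical
  obtain ⟨χ, n, hχ, hn⟩ := hG
  have h2 : ∀ a : ZMod 2, a + a = 0 := CharTwo.add_self_eq_zero
  refine ⟨χ, fun e z ↦ if e ∈ G.edgeSet then n e z else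
    n s(u, v) z + n (e.map fun t ↦ if t = u then v else t) z, hχ, ?_⟩
  have hnew : ∀ x y, (G.contract v u).Adj x y → ¬ G.Adj x y → ∃ y', s(x, y) = s(u, y') ∧
      y' ≠ u ∧ y' ≠ v ∧ G.Adj v y' := by
    rintro x y ⟨hxy, hx, hy, h | ⟨rfl, h⟩ | ⟨rfl, h⟩⟩ hG
    · exact absurd h hG
    · exact ⟨y, rfl, hxy.symm, hy, h⟩
    · exact ⟨x, Sym2.eq_swap, hxy, hx, h⟩
  have hmap : ∀ y, y ≠ u → Sym2.map (fun t ↦ if t = u then v else t) s(u, y) = s(v, y) := by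
    intro y hy
    simp [hy]
  have key : ∀ y w x, y ≠ u → y ≠ v → G.Adj v y → G.Adj w x → u ≠ w → u ≠ x → y ≠ w → y ≠ x →
      v ≠ w → v ≠ x → (n s(u, v) w + n s(v, y) w) + (n s(u, v) x + n s(v, y) x)
        + n s(w, x) u + n s(w, x) y + χ u w + χ u x + χ y w + χ y x = 0 := by
    intro y w x hyu hyv hvy hwx huw hux hyw hyx hvw hvx
    have e1 := hn u v w x huv hwx huw hux hvw hvx
    have e2 := hn v y w x hvy hwx hvw hvx hyw hyx
    linear_combination e1 + e2 - h2 (n s(w, x) v) - h2 (χ v w) - h2 (χ v x)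
  intro a b w x hab hwx haw hax hbw hbx
  have hav := hab.2.1
  have hbv := hab.2.2.1
  have hwv := hwx.2.1
  have hxv := hwx.2.2.1
  by_cases h1 : G.Adj a b <;> by_cases h3 : G.Adj w x
  · simp only [mem_edgeSet, h1, h3, if_true]
    exact hn a b w x h1 h3 haw hax hbw hbx
  · obtain ⟨y, hy, hyu, hyv, hvy⟩ := hnew w x hwx h3
    have := key y a b hyu hyv hvy h1
    simp only [mem_edgeSet, h1, h3, if_true, if_false]
    rw [hy, hmap y hyu]
    have e1 := hχ a w haw
    have e2 := hχ a x hax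
    have e3 := hχ b w hbw
    have e4 := hχ b x hbx
    have h4 : (4 : ZMod 2) = 0 := by decide
    simp only [Sym2.eq_iff] at hy
    rcases hy with ⟨rfl, rfl⟩ | ⟨rfl, rfl⟩
    · linear_combination this haw.symm hbw.symm hax.symm hbx.symm hav.symm hbv.symm
        + e1 + e2 + e3 + e4 + h4 - h2 (χ w a) - h2 (χ x a) - h2 (χ w b) - h2 (χ x b)
    · linear_combination this hax.symm hbx.symm haw.symm hbw.symm hav.symm hbv.symm
        + e1 + e2 + e3 + e4 + h4 - h2 (χ w a) - h2 (χ x a) - h2 (χ w b) - h2 (χ x b)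
  · obtain ⟨y, hy, hyu, hyv, hvy⟩ := hnew a b hab h1
    have := key y w x hyu hyv hvy h3
    simp only [mem_edgeSet, h1, h3, if_true, if_false]
    rw [hy, hmap y hyu]
    simp only [Sym2.eq_iff] at hy
    rcases hy with ⟨rfl, rfl⟩ | ⟨rfl, rfl⟩
    · linear_combination this haw hax hbw hbx hwv.symm hxv.symm
    · linear_combination this hbw hbx haw hax hwv.symm hxv.symm
  · obtain ⟨y, hy, -⟩ := hnew a b hab h1
    obtain ⟨z, hz, -⟩ := hnew w x hwx h3
    simp only [Sym2.eq_iff] at hy hz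
    grind

/-- Parities of the pairs of disjoint edges of the complete graph on five vertices. -/
lemma not_turnParity_five (χ : Fin 5 → Fin 5 → ZMod 2) (n : Fin 5 → Fin 5 → Fin 5 → ZMod 2)
    (hχ : ∀ i j, i < j → χ i j + χ j i = 1)
    (h : ∀ i j k l, i < j → k < l → i < k → j ≠ k → j ≠ l →
      n i j k + n i j l + n k l i + n k l j + χ i k + χ i l + χ j k + χ j l = 0) : False := by
  have h2 : ∀ a : ZMod 2, a + a = 0 := CharTwo.add_self_eq_zero
  simp [Fin.forall_fin_succ] at h hχ
  grind

lemma HasTurnParity.not_clique (hG : G.HasTurnParity) (v : Fin 5 → V)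
    (h : ∀ i j, i ≠ j → G.Adj (v i) (v j)) : False := by
  obtain ⟨χ, n, hχ, hn⟩ := hG
  have hne : ∀ i j, i ≠ j → v i ≠ v j := fun i j hij ↦ (h i j hij).ne
  refine not_turnParity_five (fun i j ↦ χ (v i) (v j)) (fun i j k ↦ n s(v i, v j) (v k))
    (fun i j hij ↦ hχ _ _ (hne i j hij.ne)) fun i j k l hij hkl hik hjk hjl ↦
      hn _ _ _ _ (h i j hij.ne) (h k l hkl.ne) (hne i k hik.ne) (hne i l (hik.trans hkl).ne)
        (hne j k hjk) (hne j l hjl)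

/-- Parities of the pairs of disjoint edges of the complete bipartite graph on `3 + 3` vertices;
`n i j` belongs to the edge `ij`, and `χ i j` and `χ' i j` to the two directions between the
vertices `i` and `j` of the two sides. -/
lemma not_turnParity_threeThree (α β χ χ' : Fin 3 → Fin 3 → ZMod 2)
    (nx ny : Fin 3 → Fin 3 → Fin 3 → ZMod 2)
    (hα : ∀ i j, i < j → α i j + α j i = 1) (hβ : ∀ i j, i < j → β i j + β j i = 1)
    (hχ : ∀ i j, χ i j + χ' j i = 1)
    (h : ∀ i j k l, i < k → j ≠ l → nx i j k + ny i j l + nx k l i + ny k l j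
      + α i k + χ i l + χ' j k + β j l = 0) : False := by
  simp [Fin.forall_fin_succ] at h hχ hα hβ
  grind

/-- The total parity of the turns of a walk around a vertex. -/
def walkTurns (n : Sym2 V → V → ZMod 2) {u v : V} (p : G.Walk u v) (z : V) : ZMod 2 :=
  (p.edges.map (n · z)).sum

/-- The parity relation between an edge and a walk disjoint from it. -/
lemma edge_walk_parity {χ : V → V → ZMod 2} {n : Sym2 V → V → ZMod 2}
    (hn : ∀ u v w x, G.Adj u v → G.Adj w x → u ≠ w → u ≠ x → v ≠ w → v ≠ x →
      n s(u, v) w + n s(u, v) x + n s(w, x) u + n s(w, x) v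
        + χ u w + χ u x + χ v w + χ v x = 0)
    {u v : V} (huv : G.Adj u v) {w x : V} (p : G.Walk w x) (hu : u ∉ p.support)
    (hv : v ∉ p.support) : n s(u, v) w + n s(u, v) x + walkTurns n p u + walkTurns n p v
        + χ u w + χ u x + χ v w + χ v x = 0 := by
  have h2 : ∀ a : ZMod 2, a + a = 0 := CharTwo.add_self_eq_zero
  induction p with
  | nil =>
    rename_i w
    simp only [walkTurns, Walk.edges_nil, List.map_nil, List.sum_nil]
    linear_combination h2 (n s(u, v) w) + h2 (χ u w) + h2 (χ v w)
  | @cons w y x hwy p ih =>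
    simp only [Walk.support_cons, List.mem_cons, not_or] at hu hv
    have hyp := p.start_mem_support
    have e1 := hn u v w y huv hwy hu.1 (fun h ↦ hu.2 (h ▸ hyp)) hv.1 fun h ↦ hv.2 (h ▸ hyp)
    have e2 := ih hu.2 hv.2
    simp only [walkTurns, Walk.edges_cons, List.map_cons, List.sum_cons] at e2 ⊢
    linear_combination e1 + e2 - h2 (n s(u, v) y) - h2 (χ u y) - h2 (χ v y)

/-- There is no subdivided complete bipartite graph on `3 + 3` vertices in which only the edges
at one vertex `x 2` are subdivided. -/
lemma HasTurnParity.not_threeThree (hG : G.HasTurnParity) (x y : Fin 3 → V)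
    (hx : Function.Injective x) (hy : Function.Injective y) (hxy : ∀ i j, x i ≠ y j)
    (hadj : ∀ i j, i ≠ 2 → G.Adj (x i) (y j)) (p : ∀ j, G.Walk (x 2) (y j))
    (hpx : ∀ i j, i ≠ 2 → x i ∉ (p j).support) (hpy : ∀ j l, j ≠ l → y l ∉ (p j).support) :
    False := by
  obtain ⟨χ, n, hχ, hn⟩ := hG
  let N : Fin 3 → Fin 3 → V → ZMod 2 := fun i j z ↦
    if i = 2 then walkTurns n (p j) z else n s(x i, y j) z
  refine not_turnParity_threeThree (fun i j ↦ χ (x i) (x j)) (fun i j ↦ χ (y i) (y j))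
    (fun i j ↦ χ (x i) (y j)) (fun i j ↦ χ (y i) (x j)) (fun i j k ↦ N i j (x k))
    (fun i j k ↦ N i j (y k)) (fun i j hij ↦ hχ _ _ (hx.ne hij.ne))
    (fun i j hij ↦ hχ _ _ (hy.ne hij.ne)) (fun i j ↦ hχ _ _ (hxy i j)) ?_
  intro i j k l hik hjl
  have hi : i ≠ 2 := by rintro rfl; omega
  by_cases hk : k = 2
  · subst hk
    have := edge_walk_parity hn (hadj i j hi) (p l) (hpx i l hi) (hpy l j hjl.symm)
    simp only [N, hi, if_true, if_false]
    linear_combination this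
  · have := hn _ _ _ _ (hadj i j hi) (hadj k l hk) (hx.ne hik.ne) (hxy i l) (hxy k j).symm
      (hy.ne hjl)
    simp only [N, hi, hk, if_false]
    linear_combination this

end SimpleGraph

/-! ### The number of edges -/

namespace SimpleGraph

variable {V : Type*} {G : SimpleGraph V}

lemma HasTurnParity.not_five_clique (hG : G.HasTurnParity) {a b c d e : V} (hab : G.Adj a b)
    (hac : G.Adj a c) (had : G.Adj a d) (hae : G.Adj a e) (hbc : G.Adj b c) (hbd : G.Adj b d)
    (hbe : G.Adj b e) (hcd : G.Adj c d) (hce : G.Adj c e) (hde : G.Adj d e) : False :=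
  hG.not_clique ![a, b, c, d, e] (by
    simp [Fin.forall_fin_succ, hab, hac, had, hae, hbc, hbd, hbe, hcd, hce, hde, hab.symm,
      hac.symm, had.symm, hae.symm, hbc.symm, hbd.symm, hbe.symm, hcd.symm, hce.symm, hde.symm])

lemma contract_mem_erase [DecidableEq V] {S : Finset V} (hGS : ∀ u v, G.Adj u v → u ∈ S) {u v : V}
    (huv : G.Adj u v) (x y : V) (h : (G.contract v u).Adj x y) : x ∈ S.erase v := by
  refine Finset.mem_erase.2 ⟨h.2.1, ?_⟩
  rcases h.2.2.2 with h | h | h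
  · exact hGS _ _ h
  · exact h.1 ▸ hGS _ _ huv
  · exact hGS _ _ h.2.symm

lemma deleteIncidenceSet_mem_erase [DecidableEq V] {S : Finset V}
    (hGS : ∀ u v, G.Adj u v → u ∈ S) {v : V} (x y : V) (h : (G.deleteIncidenceSet v).Adj x y) :
    x ∈ S.erase v := by
  rw [deleteIncidenceSet_adj] at h
  exact Finset.mem_erase.2 ⟨h.2.1, hGS _ _ h.1⟩

lemma exists_le_ncard_edgeSet_eq {k : ℕ} (hk : k ≤ G.edgeSet.ncard) :
    ∃ H ≤ G, H.edgeSet.ncard = k := by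
  obtain ⟨T, hT, rfl⟩ := Set.exists_subset_card_eq hk
  refine ⟨fromEdgeSet T, fun a b h ↦ hT ((fromEdgeSet_adj T).1 h).1, ?_⟩
  congr 1
  rw [edgeSet_fromEdgeSet]
  refine sdiff_eq_left.2 (Set.disjoint_left.2 fun e he hd ↦ ?_)
  exact G.not_isDiag_of_mem_edgeSet (hT he) hd

variable [Fintype V]

open Classical in
lemma sum_degree_eq_two_mul_ncard (G : SimpleGraph V) :
    ∑ v, G.degree v = 2 * G.edgeSet.ncard := by
  rw [G.sum_degrees_eq_twice_card_edges, ← coe_edgeFinset, Set.ncard_coe_finset]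

open Classical in
lemma ncard_edgeSet_deleteIncidenceSet (G : SimpleGraph V) (v : V) :
    (G.deleteIncidenceSet v).edgeSet.ncard + G.degree v = G.edgeSet.ncard := by
  have h := Set.ncard_sdiff_add_ncard_of_subset (G.incidenceSet_subset v)
  rw [edgeSet_deleteIncidenceSet, ← h, ← card_incidenceSet_eq_degree,
    Set.ncard_eq_toFinset_card' (G.incidenceSet v), Set.toFinset_card]

open Classical in
/-- The common neighbours of two vertices, as a finite set. -/
noncomputable def commonFinset (G : SimpleGraph V) (u v : V) : Finset V :=
  {w | G.Adj u w ∧ G.Adj v w}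

lemma mem_commonFinset {u v w : V} : w ∈ G.commonFinset u v ↔ G.Adj u w ∧ G.Adj v w := by
  simp [commonFinset]

open Classical in
lemma ncard_edgeSet_add_le_contract {u v : V} (huv : u ≠ v) :
    G.edgeSet.ncard + ((G.neighborFinset v).erase u).card ≤
      (G.contract v u).edgeSet.ncard + (G.commonFinset u v).card + G.degree v := by
  let T : Finset V := ((G.neighborFinset v).erase u) \ G.commonFinset u v
  have hT := Finset.le_card_sdiff (G.commonFinset u v) ((G.neighborFinset v).erase u)
  have himg : (Set.ncard ((fun w ↦ s(u, w)) '' (T : Set V))) = T.card := by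
    rw [Set.ncard_image_of_injective _ fun a b h ↦ Sym2.congr_right.1 h, Set.ncard_coe_finset]
  have hdisj : Disjoint (G.deleteIncidenceSet v).edgeSet ((fun w ↦ s(u, w)) '' (T : Set V)) := by
    rw [Set.disjoint_left]
    rintro _ he ⟨w, hw, rfl⟩
    simp only [T, Finset.coe_sdiff, Set.mem_sdiff, Finset.mem_coe, Finset.mem_erase,
      mem_neighborFinset, mem_commonFinset, not_and] at hw
    exact hw.2 (deleteIncidenceSet_le G v he) hw.1.2
  have hsub : (G.deleteIncidenceSet v).edgeSet ∪ ((fun w ↦ s(u, w)) '' (T : Set V)) ⊆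
      (G.contract v u).edgeSet := by
    rintro e (he | ⟨w, hw, rfl⟩)
    · induction e with
      | _ a b =>
        rw [mem_edgeSet, deleteIncidenceSet_adj] at he
        exact ⟨he.1.ne, he.2.1, he.2.2, .inl he.1⟩
    · simp only [T, Finset.coe_sdiff, Set.mem_sdiff, Finset.mem_coe, Finset.mem_erase,
        mem_neighborFinset, mem_commonFinset, not_and] at hw
      exact ⟨hw.1.1.symm, huv, hw.1.2.ne', .inr (.inl ⟨rfl, hw.1.2⟩)⟩
  have h := Set.ncard_le_ncard hsub
  rw [Set.ncard_union_eq hdisj, himg] at h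
  have h' := ncard_edgeSet_deleteIncidenceSet G v
  simp only [T] at h
  omega

open Classical in
lemma ncard_edgeSet_le_contract {u v : V} (huv : G.Adj u v) :
    G.edgeSet.ncard ≤ (G.contract v u).edgeSet.ncard + 1 + (G.commonFinset u v).card := by
  have h1 := ncard_edgeSet_add_le_contract (G := G) huv.ne
  have h2 := Finset.card_erase_add_one ((G.mem_neighborFinset v u).2 huv.symm)
  rw [card_neighborFinset_eq_degree] at h2
  omega

open Classical in
lemma ncard_edgeSet_le_contract_of_not_adj {u v : V} (huv : u ≠ v) (h : ¬ G.Adj u v) :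
    G.edgeSet.ncard ≤ (G.contract v u).edgeSet.ncard + (G.commonFinset u v).card := by
  have h1 := ncard_edgeSet_add_le_contract (G := G) huv
  rw [Finset.erase_eq_of_notMem fun hu ↦ h ((G.mem_neighborFinset v u).1 hu).symm,
    card_neighborFinset_eq_degree] at h1
  omega

open Classical in
/-- A vertex of degree four or five has an incident edge in at most two triangles. -/
lemma HasTurnParity.exists_card_commonFinset_le_two (hG : G.HasTurnParity) {v : V}
    (h4 : 4 ≤ G.degree v) (h5 : G.degree v ≤ 5) :
    ∃ u, G.Adj u v ∧ (G.commonFinset u v).card ≤ 2 := by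
  by_contra! hcon
  rw [← card_neighborFinset_eq_degree] at h4 h5
  set N := G.neighborFinset v
  have hN : ∀ u, u ∈ N ↔ G.Adj v u := fun u ↦ G.mem_neighborFinset v u
  have hmiss : ∀ u ∈ N, ∀ y ∈ N, ∀ z ∈ N, u ≠ y → u ≠ z → y ≠ z → ¬ G.Adj u y → G.Adj u z := by
    intro u hu y hy z hz huy huz hyz hnuy
    by_contra hnuz
    have hsub : G.commonFinset u v ⊆ ((N.erase u).erase y).erase z := by
      intro w hw
      rw [mem_commonFinset] at hw
      simp only [Finset.mem_erase, hN]
      exact ⟨fun h ↦ hnuz (h ▸ hw.1), fun h ↦ hnuy (h ▸ hw.1), hw.1.ne', hw.2⟩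
    have := Finset.card_le_card hsub
    rw [Finset.card_erase_of_mem (Finset.mem_erase.2 ⟨hyz.symm, Finset.mem_erase.2 ⟨huz.symm, hz⟩⟩),
      Finset.card_erase_of_mem (Finset.mem_erase.2 ⟨huy.symm, hy⟩), Finset.card_erase_of_mem hu] at this
    have := hcon u ((hN u).1 hu).symm
    omega
  by_cases hcl : ∀ x ∈ N, ∀ y ∈ N, x ≠ y → G.Adj x y
  · obtain ⟨a, ha⟩ := Finset.card_pos.1 (by omega : 0 < N.card)
    obtain ⟨b, hb, c, hc, d, hd, hbc, hbd, hcd⟩ := Finset.two_lt_card.1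
      (by rw [Finset.card_erase_of_mem ha]; omega : 2 < (N.erase a).card)
    simp only [Finset.mem_erase] at hb hc hd
    exact hG.not_five_clique ((hN a).1 ha) ((hN b).1 hb.2) ((hN c).1 hc.2) ((hN d).1 hd.2)
      (hcl a ha b hb.2 hb.1.symm) (hcl a ha c hc.2 hc.1.symm) (hcl a ha d hd.2 hd.1.symm)
      (hcl b hb.2 c hc.2 hbc) (hcl b hb.2 d hd.2 hbd) (hcl c hc.2 d hd.2 hcd)
  · push Not at hcl
    obtain ⟨x, hx, y, hy, hxy, hnxy⟩ := hcl
    have hN5 : N.card = 5 := by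
      by_contra h
      have hsub : G.commonFinset x v ⊆ (N.erase x).erase y := by
        intro w hw
        rw [mem_commonFinset] at hw
        simp only [Finset.mem_erase, hN]
        exact ⟨fun h ↦ hnxy (h ▸ hw.1), hw.1.ne', hw.2⟩
      have := Finset.card_le_card hsub
      rw [Finset.card_erase_of_mem (Finset.mem_erase.2 ⟨hxy.symm, hy⟩), Finset.card_erase_of_mem hx] at this
      have := hcon x ((hN x).1 hx).symm
      omega
    have hx' : ∀ z ∈ N, x ≠ z → y ≠ z → G.Adj x z := fun z hz h1 h2 ↦
      hmiss x hx y hy z hz hxy h1 h2 hnxy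
    have hy' : ∀ z ∈ N, x ≠ z → y ≠ z → G.Adj y z := fun z hz h1 h2 ↦
      hmiss y hy x hx z hz hxy.symm h2 h1 fun h ↦ hnxy h.symm
    have key : ∀ a ∈ N, ∀ b ∈ N, ∀ c ∈ N, x ≠ a → x ≠ b → x ≠ c → y ≠ a → y ≠ b → y ≠ c →
        a ≠ b → b ≠ c → G.Adj a c → False := by
      intro a ha b hb c hc xa xb xc ya yb yc hab hbc hac
      rw [hN] at hx hy
      have hA : ∀ s t, G.Adj s t → s ≠ x → t ≠ x → (G.contract x b).Adj s t :=
        fun s t h h1 h2 ↦ ⟨h.ne, h1, h2, .inl h⟩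
      have hB : ∀ t, G.Adj x t → t ≠ x → b ≠ t → (G.contract x b).Adj b t :=
        fun t h h1 h2 ↦ ⟨h2, xb.symm, h1, .inr (.inl ⟨rfl, h⟩)⟩
      refine (hG.contract (hx' b hb xb yb).symm).not_five_clique (a := v) (b := b) (c := y)
        (d := a) (e := c) (hA _ _ ((hN b).1 hb) hx.ne xb.symm) (hA _ _ hy hx.ne hxy.symm)
        (hA _ _ ((hN a).1 ha) hx.ne xa.symm) (hA _ _ ((hN c).1 hc) hx.ne xc.symm)
        (hA _ _ (hy' b hb xb yb).symm xb.symm hxy.symm) (hB _ (hx' a ha xa ya) xa.symm hab.symm)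
        (hB _ (hx' c hc xc yc) xc.symm hbc) (hA _ _ (hy' a ha xa ya) hxy.symm xa.symm)
        (hA _ _ (hy' c hc xc yc) hxy.symm xc.symm) (hA _ _ hac xa.symm xc.symm)
    obtain ⟨a, ha, b, hb, c, hc, hab, hac, hbc⟩ := Finset.two_lt_card.1
      (by rw [Finset.card_erase_of_mem (Finset.mem_erase.2 ⟨hxy.symm, hy⟩), Finset.card_erase_of_mem hx]; omega :
        2 < ((N.erase x).erase y).card)
    simp only [Finset.mem_erase] at ha hb hc
    by_cases hac' : G.Adj a c
    · exact key a ha.2.2 b hb.2.2 c hc.2.2 ha.2.1.symm hb.2.1.symm hc.2.1.symm ha.1.symm hb.1.symm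
        hc.1.symm hab hbc hac'
    · exact key a ha.2.2 c hc.2.2 b hb.2.2 ha.2.1.symm hc.2.1.symm hb.2.1.symm ha.1.symm hc.1.symm
        hb.1.symm hac hbc.symm (hmiss a ha.2.2 c hc.2.2 b hb.2.2 hac hab hbc.symm hac')

open Classical in
/-- If there are fewer than `d * |S|` edge ends, then `S` has a vertex of degree below `d`. -/
lemma exists_degree_lt {S : Finset V} {d : ℕ} (h : 2 * G.edgeSet.ncard < d * S.card) :
    ∃ v ∈ S, G.degree v < d := by
  by_contra! hcon
  have h1 := Finset.card_nsmul_le_sum S (fun v ↦ G.degree v) d hcon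
  have h2 : ∑ v ∈ S, G.degree v ≤ ∑ v, G.degree v :=
    Finset.sum_le_sum_of_subset (Finset.subset_univ S)
  rw [sum_degree_eq_two_mul_ncard, smul_eq_mul, mul_comm] at *
  omega

lemma exists_adj_of_ncard_pos (h : 0 < G.edgeSet.ncard) : ∃ a b, G.Adj a b := by
  obtain ⟨e, he⟩ := (Set.ncard_pos (Set.toFinite _)).1 h
  induction e with
  | _ a b => exact ⟨a, b, he⟩

open Classical in
/-- A graph with turn parities has at most `3n - 3` edges. -/
theorem HasTurnParity.ncard_edgeSet_add_three_le (hG : G.HasTurnParity) (S : Finset V)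
    (hS : S.Nonempty) (hGS : ∀ u v, G.Adj u v → u ∈ S) :
    G.edgeSet.ncard + 3 ≤ 3 * S.card := by
  induction hN : S.card using Nat.strong_induction_on generalizing G S with
  | _ N ih =>
  subst hN
  by_contra! hcon
  have hScard := hS.card_pos
  obtain ⟨H, hHG, hH⟩ := exists_le_ncard_edgeSet_eq (by omega : 3 * S.card - 2 ≤ G.edgeSet.ncard)
  replace hGS : ∀ u v, H.Adj u v → u ∈ S := fun u v h ↦ hGS u v (hHG h)
  replace hG := hG.mono hHG
  obtain ⟨a, b, hab⟩ := exists_adj_of_ncard_pos (by omega : 0 < H.edgeSet.ncard)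
  have hS2 : 2 ≤ S.card := Finset.one_lt_card.2 ⟨a, hGS _ _ hab, b, hGS _ _ hab.symm, hab.ne⟩
  obtain ⟨v, hvS, hv⟩ := exists_degree_lt (G := H) (S := S) (d := 6) (by omega)
  have hcard := Finset.card_erase_add_one hvS
  have hne : (S.erase v).Nonempty := Finset.card_pos.1 (by omega)
  by_cases h3 : H.degree v ≤ 3
  · have hdel := ncard_edgeSet_deleteIncidenceSet H v
    have := ih _ (by omega) (hG.mono (H.deleteIncidenceSet_le v)) (S.erase v) hne
      (deleteIncidenceSet_mem_erase hGS) rfl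
    omega
  · obtain ⟨u, huv, hu⟩ := hG.exists_card_commonFinset_le_two (v := v) (by omega) (by omega)
    have hle := ncard_edgeSet_le_contract huv
    have := ih _ (by omega) (hG.contract huv) (S.erase v) hne (contract_mem_erase hGS huv) rfl
    omega

end SimpleGraph

/-! ### The number of edges of a bipartite graph -/

namespace SimpleGraph

variable {V : Type*} {G : SimpleGraph V}

/-- The subgraph of `G` consisting of the edges with both ends in `A`. -/
def inside (G : SimpleGraph V) (A : Set V) : SimpleGraph V where
  Adj x y := G.Adj x y ∧ x ∈ A ∧ y ∈ A
  symm := ⟨fun _ _ h ↦ ⟨h.1.symm, h.2.2, h.2.1⟩⟩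
  loopless := ⟨fun _ h ↦ h.1.ne rfl⟩

lemma inside_le (A : Set V) : G.inside A ≤ G := fun _ _ h ↦ h.1

lemma Reachable.mem_of_adj_mem {A : Set V} {x y : V} (h : G.Reachable x y)
    (hA : ∀ u v, G.Adj u v → v ∈ A) (hx : x ∈ A) : y ∈ A := by
  obtain ⟨p⟩ := h.symm
  cases p with
  | nil => exact hx
  | cons h _ => exact hA _ _ h.symm

lemma Reachable.exists_walk_inside {A : Set V} {x y : V} (h : (G.inside A).Reachable x y)
    (hx : x ∈ A) : ∃ p : G.Walk x y, ∀ z ∈ p.support, z ∈ A := by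
  obtain ⟨p⟩ := h
  induction p with
  | nil => exact ⟨.nil, by simpa using hx⟩
  | cons h _ ih =>
    obtain ⟨q, hq⟩ := ih h.2.2
    exact ⟨.cons h.1 q, by simpa using ⟨hx, hq⟩⟩

/-- Three vertices joined by paths to three others form a subdivision of `K₃,₃`. -/
lemma HasTurnParity.false_of_walks (hG : G.HasTurnParity) {a b c d p q : V} (hab : G.Adj b a)
    (hac : G.Adj c a) (had : G.Adj d a) (hbp : G.Adj b p) (hcp : G.Adj c p) (hbq : G.Adj b q)
    (hcq : G.Adj c q) (hbc : b ≠ c) (hbd : b ≠ d) (hcd : c ≠ d) (hpa : p ≠ a) (hqa : q ≠ a)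
    (hpq : p ≠ q) (hdp : d ≠ p) (hdq : d ≠ q)
    (wp : G.Walk d p) (hwp : ∀ z ∈ wp.support, z ∈ ({b, c, q, a}ᶜ : Set V))
    (wq : G.Walk d q) (hwq : ∀ z ∈ wq.support, z ∈ ({b, c, p, a}ᶜ : Set V)) : False := by
  have hw : ∀ j : Fin 3, ∃ w : G.Walk d (![a, p, q] j), b ∉ w.support ∧ c ∉ w.support ∧
      ∀ l, j ≠ l → ![a, p, q] l ∉ w.support := by
    intro j
    fin_cases j
    · refine ⟨.cons had .nil, ?_, ?_, ?_⟩
      · simp [hbd, hab.ne]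
      · simp [hcd, hac.ne]
      · simp [Fin.forall_fin_succ, hpa, hqa, hdp.symm, hdq.symm]
    · refine ⟨wp, fun h ↦ hwp _ h (by simp), fun h ↦ hwp _ h (by simp), ?_⟩
      have ha' : a ∉ wp.support := fun h ↦ hwp _ h (by simp)
      have hq' : q ∉ wp.support := fun h ↦ hwp _ h (by simp)
      simp [Fin.forall_fin_succ, ha', hq']
    · refine ⟨wq, fun h ↦ hwq _ h (by simp), fun h ↦ hwq _ h (by simp), ?_⟩
      have ha' : a ∉ wq.support := fun h ↦ hwq _ h (by simp)
      have hp' : p ∉ wq.support := fun h ↦ hwq _ h (by simp)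
      simp [Fin.forall_fin_succ, ha', hp']
  choose w hwb hwc hwy using hw
  refine hG.not_threeThree ![b, c, d] ![a, p, q] ?_ ?_ ?_ ?_ w ?_ hwy
  · intro i j
    fin_cases i <;> fin_cases j <;> simp [hbc, hbd, hcd, hbc.symm, hbd.symm, hcd.symm]
  · intro i j
    fin_cases i <;> fin_cases j <;> simp [hpa, hqa, hpq, hpa.symm, hqa.symm, hpq.symm]
  · simp [Fin.forall_fin_succ, hab.ne, hac.ne, had.ne, hbp.ne, hbq.ne, hcp.ne, hcq.ne, hdp, hdq]
  · simp [Fin.forall_fin_succ, hab, hac, hbp, hbq, hcp, hcq]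
  · intro i j hi
    fin_cases i
    · exact hwb j
    · exact hwc j
    · exact absurd rfl hi

/-- If every edge lies in one of two parts and both parts contain two given edges, the edge
numbers of the parts count those edges twice. -/
lemma ncard_edgeSet_add_two_le_inside [Finite V] {A B : Set V}
    (hAB : ∀ u v, G.Adj u v → u ∈ A ∧ v ∈ A ∨ u ∈ B ∧ v ∈ B) {b c s : V} (hbc : b ≠ c)
    (hb : G.Adj b s) (hc : G.Adj c s) (hbAB : b ∈ A ∩ B) (hcAB : c ∈ A ∩ B) (hsAB : s ∈ A ∩ B) :
    G.edgeSet.ncard + 2 ≤ (G.inside A).edgeSet.ncard + (G.inside B).edgeSet.ncard := by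
  rw [← Set.ncard_union_add_ncard_inter]
  refine Nat.add_le_add (Set.ncard_le_ncard fun e he ↦ ?_) ?_
  · induction e with
    | _ u v =>
      rcases hAB u v he with h | h
      · exact .inl ⟨he, h⟩
      · exact .inr ⟨he, h⟩
  · rw [← Set.ncard_pair (a := s(b, s)) (b := s(c, s)) fun h ↦ hbc (Sym2.congr_left.1 h)]
    refine Set.ncard_le_ncard ?_
    rintro e (rfl | rfl)
    · exact ⟨⟨hb, hbAB.1, hsAB.1⟩, hb, hbAB.2, hsAB.2⟩
    · exact ⟨⟨hc, hcAB.1, hsAB.1⟩, hc, hcAB.2, hsAB.2⟩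

lemma ncard_edgeSet_le_two_of_card_three {side : V → Bool}
    (hside : ∀ u v, G.Adj u v → side v = !side u) {S : Finset V} (hS : S.card = 3)
    (hGS : ∀ u v, G.Adj u v → u ∈ S) : G.edgeSet.ncard ≤ 2 := by
  classical
  obtain ⟨x, y, z, hxy, hxz, hyz, rfl⟩ := Finset.card_eq_three.1 hS
  by_contra! hcon
  have hsub : G.edgeSet ⊆ ({s(x, y), s(x, z), s(y, z)} : Finset (Sym2 V)) := by
    intro e he
    induction e with
    | _ a b =>
      have h1 := hGS _ _ he
      have h2 := hGS _ _ (G.adj_symm he)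
      have h3 := G.ne_of_adj he
      simp only [Finset.mem_insert, Finset.mem_singleton] at h1 h2
      rcases h1 with rfl | rfl | rfl <;> rcases h2 with rfl | rfl | rfl <;> simp_all
  have heq := Set.eq_of_subset_of_ncard_le hsub (by
    rw [Set.ncard_coe_finset]
    exact Finset.card_le_three.trans hcon)
  have h1 : G.Adj x y := by rw [← mem_edgeSet, heq]; simp
  have h2 : G.Adj x z := by rw [← mem_edgeSet, heq]; simp
  have h3 : G.Adj y z := by rw [← mem_edgeSet, heq]; simp
  have h1 := hside _ _ h1
  have h2 := hside _ _ h2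
  have h3 := hside _ _ h3
  simp [h1, h2] at h3

variable [Fintype V]

open Classical in
/-- Identifying two neighbours of a vertex of degree three with few common neighbours. -/
lemma HasTurnParity.exists_identify (hG : G.HasTurnParity) {side : V → Bool}
    (hside : ∀ u v, G.Adj u v → side v = !side u) {S : Finset V}
    (hGS : ∀ u v, G.Adj u v → u ∈ S) {a b c : V} (hab : G.Adj a b) (hac : G.Adj a c) (hbc : b ≠ c)
    (hcard : (G.commonFinset b c).card ≤ 2) :
    ∃ H : SimpleGraph V, H.HasTurnParity ∧ (∀ u v, H.Adj u v → side v = !side u) ∧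
      (∀ u v, H.Adj u v → u ∈ (S.erase a).erase c) ∧
      G.edgeSet.ncard ≤ H.edgeSet.ncard + G.degree a + 1 := by
  have hsb := hside _ _ hab
  have hsc := hside _ _ hac
  have hsbc : side b = side c := by rw [hsb, hsc]
  have hadj : (G.contract a b).Adj b c := ⟨hbc, hab.ne', hac.ne', .inr (.inl ⟨rfl, hac⟩)⟩
  have hle : (G.deleteIncidenceSet a).contract c b ≤ (G.contract a b).contract c b := by
    intro x y h
    simp only [contract_adj, deleteIncidenceSet_adj] at h ⊢
    grind
  refine ⟨(G.deleteIncidenceSet a).contract c b, ((hG.contract hab.symm).contract hadj).mono hle,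
    ?_, ?_, ?_⟩
  · intro x y h
    simp only [contract_adj, deleteIncidenceSet_adj] at h
    rcases h.2.2.2 with h | h | h
    · exact hside _ _ h.1
    · rw [h.1, hsbc]
      exact hside _ _ h.2.1
    · rw [h.1, hsbc, hside _ _ h.2.1, Bool.not_not]
  · intro x y h
    exact contract_mem_erase (contract_mem_erase hGS hab.symm) hadj x y (hle h)
  · have h1 := ncard_edgeSet_le_contract_of_not_adj (G := G.deleteIncidenceSet a) hbc
      fun h ↦ by simpa [hsbc] using hside _ _ (deleteIncidenceSet_le G a h)
    have h2 := ncard_edgeSet_deleteIncidenceSet G a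
    have h3 : (G.deleteIncidenceSet a).commonFinset b c ⊆ (G.commonFinset b c).erase a := by
      intro w hw
      simp only [mem_commonFinset, deleteIncidenceSet_adj, Finset.mem_erase] at hw ⊢
      exact ⟨hw.1.2.2, hw.1.1, hw.2.1⟩
    have h4 := Finset.card_le_card h3
    have h5 := Finset.card_erase_add_one (mem_commonFinset.2 ⟨hab.symm, hac.symm⟩)
    omega

open Classical in
/-- A bipartite graph with turn parities and at least three vertices has at most `2n - 4` edges. -/
theorem HasTurnParity.ncard_edgeSet_add_four_le (hG : G.HasTurnParity) {side : V → Bool}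
    (hside : ∀ u v, G.Adj u v → side v = !side u) (S : Finset V) (hS : 3 ≤ S.card)
    (hGS : ∀ u v, G.Adj u v → u ∈ S) : G.edgeSet.ncard + 4 ≤ 2 * S.card := by
  induction hN : S.card using Nat.strong_induction_on generalizing G S with
  | _ N ih =>
  subst hN
  by_contra! hcon
  obtain ⟨H, hHG, hH⟩ := exists_le_ncard_edgeSet_eq (by omega : 2 * S.card - 3 ≤ G.edgeSet.ncard)
  replace hGS : ∀ u v, H.Adj u v → u ∈ S := fun u v h ↦ hGS u v (hHG h)
  replace hside : ∀ u v, H.Adj u v → side v = !side u := fun u v h ↦ hside u v (hHG h)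
  replace hG := hG.mono hHG
  by_cases hS3 : S.card = 3
  · have := ncard_edgeSet_le_two_of_card_three hside hS3 hGS
    omega
  by_cases hlow : ∃ v ∈ S, H.degree v ≤ 2
  · obtain ⟨v, hvS, hv⟩ := hlow
    have hcard := Finset.card_erase_add_one hvS
    have hdel := ncard_edgeSet_deleteIncidenceSet H v
    have := ih _ (by omega) (hG.mono (H.deleteIncidenceSet_le v))
      (fun u v h ↦ hside u v (H.deleteIncidenceSet_le _ h)) (S.erase v) (by omega)
      (deleteIncidenceSet_mem_erase hGS) rfl
    omega
  push Not at hlow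
  obtain ⟨a, haS, ha⟩ := exists_degree_lt (G := H) (S := S) (d := 4) (by omega)
  have ha3 : H.degree a = 3 := by
    have := hlow a haS
    omega
  obtain ⟨b, c, d, hbc, hbd, hcd, hNa⟩ := Finset.card_eq_three.1
    ((H.card_neighborFinset_eq_degree a).trans ha3)
  have hNa' : ∀ x, H.Adj a x ↔ x = b ∨ x = c ∨ x = d := fun x ↦ by
    rw [← mem_neighborFinset, hNa]; simp
  have hab : H.Adj a b := by simp [hNa']
  have hac : H.Adj a c := by simp [hNa']
  have had : H.Adj a d := by simp [hNa']
  have hS6 : 6 ≤ S.card := by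
    have hdisj : Disjoint (H.neighborFinset a) (H.neighborFinset b) := by
      rw [Finset.disjoint_left]
      intro x hx hx'
      rw [mem_neighborFinset] at hx hx'
      have h1 := hside _ _ hx
      simp [hside _ _ hx', hside _ _ hab] at h1
    have hsub : H.neighborFinset a ∪ H.neighborFinset b ⊆ S := by
      intro x hx
      rw [Finset.mem_union, mem_neighborFinset, mem_neighborFinset] at hx
      rcases hx with h | h <;> exact hGS _ _ h.symm
    have h := Finset.card_le_card hsub
    rw [Finset.card_union_of_disjoint hdisj, card_neighborFinset_eq_degree,
      card_neighborFinset_eq_degree] at h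
    have := hlow b (hGS _ _ hab.symm)
    omega
  by_cases hcommon : (H.commonFinset b c).card ≤ 2
  · obtain ⟨K, hK, hKside, hKS, hKcard⟩ := hG.exists_identify hside hGS hab hac hbc hcommon
    have h1 := Finset.card_erase_add_one haS
    have h2 := Finset.card_erase_add_one (Finset.mem_erase.2 ⟨hac.ne', hGS _ _ hac.symm⟩)
    have := ih _ (by omega) hK hKside _ (by omega) hKS rfl
    omega
  have hne : ∀ u v, side v = !side u → u ≠ v := by
    rintro u v h rfl
    simp at h
  have hsb := hside _ _ hab
  have hsc := hside _ _ hac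
  have hsd := hside _ _ had
  have hfar : ∀ s y, s ≠ a → y ≠ a → y ≠ s → H.Adj b s → H.Adj c s → H.Adj b y → H.Adj c y →
      ∃ w : H.Walk d y, ∀ z ∈ w.support, z ∈ ({b, c, s, a}ᶜ : Set V) := by
    intro s y hsa hya hys hbs hcs hby hcy
    have hdA : d ∈ ({b, c, s, a}ᶜ : Set V) := by
      simp [hbd.symm, hcd.symm, had.ne', hne d s (by rw [hside _ _ hbs, hsb, hsd])]
    have hyA : y ∈ ({b, c, s, a}ᶜ : Set V) := by
      simp [hby.ne', hcy.ne', hys, hya]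
    by_cases hreach : (H.inside {b, c, s, a}ᶜ).Reachable d y
    · exact hreach.exists_walk_inside hdA
    exfalso
    let X : Finset V := {x | (H.inside {b, c, s, a}ᶜ).Reachable y x}
    have hX : ∀ x, x ∈ X ↔ (H.inside {b, c, s, a}ᶜ).Reachable y x := by simp [X]
    have hXT : ∀ x ∈ X, x ∈ ({b, c, s, a}ᶜ : Set V) := fun x hx ↦
      ((hX x).1 hx).mem_of_adj_mem (fun _ _ h ↦ h.2.2) hyA
    have hXS : X ⊆ S := fun x hx ↦
      ((hX x).1 hx).mem_of_adj_mem (A := S) (fun _ _ h ↦ hGS _ _ h.1.symm) (hGS _ _ hby.symm)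
    have hyX : y ∈ X := (hX y).2 .rfl
    have hdX : d ∉ X := fun h ↦ hreach ((hX d).1 h).symm
    have hbX : b ∉ X := fun h ↦ hXT b h (by simp)
    have hcX : c ∉ X := fun h ↦ hXT c h (by simp)
    have hsX : s ∉ X := fun h ↦ hXT s h (by simp)
    have haX : a ∉ X := fun h ↦ hXT a h (by simp)
    have hclosed : ∀ x ∈ X, ∀ z, H.Adj x z → z ∈ X ∨ z = b ∨ z = c ∨ z = s := by
      intro x hx z hxz
      by_cases hz : z ∈ ({b, c, s, a}ᶜ : Set V)
      · exact .inl ((hX z).2 (((hX x).1 hx).trans (Adj.reachable ⟨hxz, hXT x hx, hz⟩)))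
      · have hza : z ≠ a := by
          rintro rfl
          rcases (hNa' x).1 hxz.symm with rfl | rfl | rfl <;> contradiction
        simp only [Set.mem_compl_iff, Set.mem_insert_iff, Set.mem_singleton_iff, not_not] at hz
        tauto
    let P : Finset V := X ∪ {b, c, s}
    let Q : Finset V := S \ X
    have hP : P.card = X.card + 3 := by
      rw [Finset.card_union_of_disjoint, Finset.card_eq_three.2 ⟨b, c, s, hbc, hbs.ne, hcs.ne, rfl⟩]
      simp [hbX, hcX, hsX]
    have hQ : Q.card + X.card = S.card := Finset.card_sdiff_add_card_eq_card hXS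
    have hPS : P.card < S.card := by
      refine Finset.card_lt_card ((Finset.ssubset_iff_of_subset ?_).2 ⟨a, haS, ?_⟩)
      · refine Finset.union_subset hXS ?_
        simp [Finset.insert_subset_iff, hGS _ _ hbs, hGS _ _ hcs, hGS _ _ hbs.symm]
      · simp [P, haX, hab.ne, hac.ne, hsa.symm]
    have hX0 : 0 < X.card := Finset.card_pos.2 ⟨y, hyX⟩
    have hedges := ncard_edgeSet_add_two_le_inside (G := H) (A := (P : Set V)) (B := (Q : Set V))
      (by
        intro u v huv
        by_cases hu : u ∈ X
        · have := hclosed u hu v huv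
          left
          simp [P]
          tauto
        by_cases hv : v ∈ X
        · have := hclosed v hv u huv.symm
          left
          simp [P]
          tauto
        · right
          simp [Q, hu, hv, hGS _ _ huv, hGS _ _ huv.symm])
      hbc hbs hcs (by simp [P, Q, hbX, hGS _ _ hbs]) (by simp [P, Q, hcX, hGS _ _ hcs])
      (by simp [P, Q, hsX, hGS _ _ hbs.symm])
    have hi1 := ih _ (by omega) (hG.mono (H.inside_le P)) (fun u v h ↦ hside u v h.1) P (by omega)
      (fun u v h ↦ h.2.1) rfl
    have hi2 := ih _ (by omega) (hG.mono (H.inside_le Q)) (fun u v h ↦ hside u v h.1) Q (by omega)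
      (fun u v h ↦ h.2.1) rfl
    omega
  have haC : a ∈ H.commonFinset b c := mem_commonFinset.2 ⟨hab.symm, hac.symm⟩
  obtain ⟨p, hp, q, hq, hpq⟩ := Finset.one_lt_card.1
    (by rw [Finset.card_erase_of_mem haC]; omega : 1 < ((H.commonFinset b c).erase a).card)
  simp only [Finset.mem_erase, mem_commonFinset] at hp hq
  obtain ⟨hpa, hbp, hcp⟩ := hp
  obtain ⟨hqa, hbq, hcq⟩ := hq
  obtain ⟨wp, hwp⟩ := hfar q p hqa hpa hpq hbq hcq hbp hcp
  obtain ⟨wq, hwq⟩ := hfar p q hpa hqa hpq.symm hbp hcp hbq hcq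
  have hbase : ∀ z, H.Adj b z → ∀ u, side u = side b → u ≠ z := fun z hz u hu ↦
    hne u z (by rw [hside _ _ hz, hu])
  have hcb : side c = side b := by rw [hsc, hsb]
  have hdb : side d = side b := by rw [hsd, hsb]
  have hdp := hbase p hbp d hdb
  have hdq := hbase q hbq d hdb
  exact hG.false_of_walks hab.symm hac.symm had.symm hbp hcp hbq hcq hbc hbd hcd hpa hqa hpq hdp hdq wp
    hwp wq hwq

end SimpleGraph

/-! ### Light vertices -/

namespace SimpleGraph

variable {V : Type*} [Fintype V] {G : SimpleGraph V}

lemma HasTurnParity.ncard_edgeSet_le_two_mul (hG : G.HasTurnParity) {side : V → Bool}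
    (hside : ∀ u v, G.Adj u v → side v = !side u) (S : Finset V)
    (hGS : ∀ u v, G.Adj u v → u ∈ S) : G.edgeSet.ncard ≤ 2 * S.card := by
  rcases S.eq_empty_or_nonempty with rfl | hS
  · by_contra! h
    obtain ⟨a, b, hab⟩ := exists_adj_of_ncard_pos (by omega : 0 < G.edgeSet.ncard)
    simpa using hGS a b hab
  by_cases h3 : 3 ≤ S.card
  · have := hG.ncard_edgeSet_add_four_le hside S h3 hGS
    omega
  · have := hG.ncard_edgeSet_add_three_le S hS hGS
    omega

open Classical in
/-- The number of neighbours of `v` of degree at least `t`. -/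
noncomputable def bigDegree (G : SimpleGraph V) (t : ℕ) (v : V) : ℕ :=
  {u ∈ G.neighborFinset v | t ≤ G.degree u}.card

open Classical in
lemma bigDegree_le_degree (t : ℕ) (v : V) : G.bigDegree t v ≤ G.degree v := by
  rw [← card_neighborFinset_eq_degree]
  exact Finset.card_filter_le _ _

open Classical in
lemma bigDegree_anti {s t : ℕ} (h : s ≤ t) (v : V) : G.bigDegree t v ≤ G.bigDegree s v :=
  Finset.card_le_card (Finset.monotone_filter_right _ fun _ _ ht ↦ h.trans ht)

open Classical in
lemma exists_degree_lt_of_bigDegree_lt {t : ℕ} {v : V} (h : G.bigDegree t v < G.degree v) :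
    ∃ u, G.Adj v u ∧ G.degree u < t := by
  by_contra! hcon
  refine h.ne ?_
  rw [bigDegree, Finset.filter_true_of_mem, card_neighborFinset_eq_degree]
  intro u hu
  exact hcon u ((G.mem_neighborFinset v u).1 hu)

open Classical in
lemma HasTurnParity.sum_bigDegree_sub_two_le (hG : G.HasTurnParity) {t : ℕ} (ht : 6 ≤ t) :
    ∑ v, (if G.degree v ≤ 5 then G.bigDegree t v - 2 else 0) ≤
      2 * ∑ v, (if t ≤ G.degree v then 1 else 0) := by
  let A : Finset V := {v | G.degree v ≤ 5 ∧ 3 ≤ G.bigDegree t v}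
  let B : Finset V := {v | t ≤ G.degree v}
  have hA : ∀ v, v ∈ A ↔ G.degree v ≤ 5 ∧ 3 ≤ G.bigDegree t v := by simp [A]
  have hB : ∀ v, v ∈ B ↔ t ≤ G.degree v := by simp [B]
  have hAB : Disjoint A B := Finset.disjoint_left.2 fun v h1 h2 ↦ by
    rw [hA] at h1
    rw [hB] at h2
    omega
  let H : SimpleGraph V :=
    { Adj := fun x y ↦ G.Adj x y ∧ (x ∈ A ∧ y ∈ B ∨ x ∈ B ∧ y ∈ A)
      symm := ⟨fun x y h ↦ ⟨h.1.symm, h.2.symm.imp And.symm And.symm⟩⟩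
      loopless := ⟨fun x h ↦ h.1.ne rfl⟩ }
  have hbip : H.IsBipartiteWith (A : Set V) (B : Set V) :=
    ⟨Finset.disjoint_coe.2 hAB, fun x y h ↦ h.2⟩
  have hdeg : ∀ v ∈ A, H.degree v = G.bigDegree t v := by
    intro v hv
    rw [← card_neighborFinset_eq_degree, bigDegree]
    congr 1
    ext u
    have := Finset.disjoint_left.1 hAB hv
    simp only [mem_neighborFinset, Finset.mem_filter, H, ← hB]
    tauto
  have hle := (hG.mono (H := H) fun x y h ↦ h.1).ncard_edgeSet_le_two_mul
    (side := fun v ↦ decide (v ∈ A))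
    (by
      rintro x y ⟨-, h | h⟩
      · simp [h.1, Finset.disjoint_right.1 hAB h.2]
      · simp [h.2, Finset.disjoint_right.1 hAB h.1])
    (A ∪ B) (by
      rintro x y ⟨-, h | h⟩
      · exact Finset.mem_union_left _ h.1
      · exact Finset.mem_union_right _ h.1)
  have hsum := isBipartiteWith_sum_degrees_eq_card_edges hbip
  have hdegsum : ∑ v ∈ A, H.degree v = ∑ v ∈ A, G.bigDegree t v := Finset.sum_congr rfl hdeg
  rw [← Set.ncard_coe_finset, coe_edgeFinset, hdegsum] at hsum
  rw [Finset.card_union_of_disjoint hAB, ← hsum] at hle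
  have hsplit : ∑ v ∈ A, G.bigDegree t v = ∑ v ∈ A, (G.bigDegree t v - 2) + 2 * A.card := by
    rw [mul_comm, ← smul_eq_mul, ← Finset.sum_const, ← Finset.sum_add_distrib]
    refine Finset.sum_congr rfl fun v hv ↦ ?_
    have := ((hA v).1 hv).2
    omega
  have hlow : ∑ v, (if G.degree v ≤ 5 then G.bigDegree t v - 2 else 0) =
      ∑ v ∈ A, (G.bigDegree t v - 2) := by
    rw [Finset.sum_filter]
    refine Finset.sum_congr rfl fun v _ ↦ ?_
    split_ifs <;> omega
  have hBcard : ∑ v, (if t ≤ G.degree v then 1 else 0) = B.card := by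
    rw [Finset.card_filter]
  omega

open Classical in
/-- A nonempty graph with turn parities has a vertex of degree at most five with few neighbours
of large degree. -/
lemma HasTurnParity.exists_light (hG : G.HasTurnParity) {a b : V} (hab : G.Adj a b) :
    ∃ v, 1 ≤ G.degree v ∧ G.degree v ≤ 5 ∧
      3 * ((G.bigDegree 9 v - 2) + (G.bigDegree 12 v - 2)) < 2 * (6 - G.degree v) := by
  by_contra! hcon
  have hpos : ∀ u v, G.Adj u v → u ∈ ({v | 0 < G.degree v} : Finset V) := fun u v h ↦ by
    simpa using (G.degree_pos_iff_exists_adj u).2 ⟨v, h⟩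
  have hE := hG.ncard_edgeSet_add_three_le _ ⟨a, hpos a b hab⟩ hpos
  rw [Finset.card_filter] at hE
  have h9 := hG.sum_bigDegree_sub_two_le (t := 9) (by norm_num)
  have h12 := hG.sum_bigDegree_sub_two_le (t := 12) (by norm_num)
  have hsum : ∑ v, (12 * (if 0 < G.degree v then 1 else 0) + 6 * (if 9 ≤ G.degree v then 1 else 0) +
        6 * (if 12 ≤ G.degree v then 1 else 0)) ≤
      ∑ v, (2 * G.degree v + 3 * (if G.degree v ≤ 5 then G.bigDegree 9 v - 2 else 0) +
        3 * (if G.degree v ≤ 5 then G.bigDegree 12 v - 2 else 0)) := by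
    refine Finset.sum_le_sum fun v _ ↦ ?_
    have := hcon v
    split_ifs <;> omega
  simp only [Finset.sum_add_distrib, ← Finset.mul_sum, sum_degree_eq_two_mul_ncard] at hsum
  omega

open Classical in
lemma sum_degree_sub_one_le {D : ℕ} (hD : 12 ≤ D) (hdeg : ∀ v, G.degree v ≤ D) (v : V) :
    ∑ u ∈ G.neighborFinset v, (G.degree u - 1) ≤
      7 * G.degree v + 3 * G.bigDegree 9 v + (D - 11) * G.bigDegree 12 v := by
  rw [← card_neighborFinset_eq_degree, bigDegree, bigDegree, Finset.card_filter, Finset.card_filter,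
    Finset.card_eq_sum_ones, Finset.mul_sum, Finset.mul_sum, Finset.mul_sum,
    ← Finset.sum_add_distrib, ← Finset.sum_add_distrib]
  refine Finset.sum_le_sum fun u _ ↦ ?_
  have := hdeg u
  split_ifs <;> omega

open Classical in
/-- A vertex of degree at most five which can be contracted into a neighbour without creating
a vertex of large degree, and with few vertices at distance two. -/
lemma HasTurnParity.exists_reducible (hG : G.HasTurnParity) {a b : V} (hab : G.Adj a b) {D : ℕ}
    (hD : 12 ≤ D) (hdeg : ∀ v, G.degree v ≤ D) :
    ∃ v u, G.Adj u v ∧ G.degree v ≤ 5 ∧ G.degree u + G.degree v ≤ D + 2 ∧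
      ∑ w ∈ G.neighborFinset v, (G.degree w - 1) ≤ 2 * D + 19 := by
  obtain ⟨v, h1, h5, hl⟩ := hG.exists_light hab
  have h12 := G.bigDegree_anti (by norm_num : 9 ≤ 12) v
  have h9 := G.bigDegree_le_degree 9 v
  have hsum := sum_degree_sub_one_le hD hdeg v
  have hmul : (D - 11) * G.bigDegree 12 v ≤ (D - 11) * 2 := Nat.mul_le_mul_left _ (by omega)
  have hu : ∃ u, G.Adj v u ∧ G.degree u + G.degree v ≤ D + 2 := by
    by_cases h3 : 3 < G.degree v
    · obtain ⟨u, hu, hlt⟩ := G.exists_degree_lt_of_bigDegree_lt (t := 9) (v := v) (by omega)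
      exact ⟨u, hu, by omega⟩
    by_cases h3' : G.degree v = 3
    · obtain ⟨u, hu, hlt⟩ := G.exists_degree_lt_of_bigDegree_lt (t := 12) (v := v) (by omega)
      exact ⟨u, hu, by omega⟩
    · obtain ⟨u, hu⟩ := (G.degree_pos_iff_exists_adj v).1 h1
      have := hdeg u
      exact ⟨u, hu, by omega⟩
  obtain ⟨u, hu, hle⟩ := hu
  refine ⟨v, u, hu.symm, h5, hle, ?_⟩
  rcases (by omega : G.degree v ≤ 4 ∨ G.degree v = 5) with h | h <;> omega

end SimpleGraph

/-! ### Frugal colourings -/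

lemma Finset.exists_card_mul_le_card_fiber_lt {α β : Type*} [DecidableEq β] (s : Finset α)
    (c : α → β) {k : ℕ} (hk : 1 ≤ k) :
    ∃ F : Finset β, F.card * k ≤ s.card ∧ ∀ b ∉ F, {x ∈ s | c x = b}.card < k := by
  refine ⟨{b ∈ s.image c | k ≤ {x ∈ s | c x = b}.card}, ?_, fun b hb ↦ ?_⟩
  · rw [Finset.card_eq_sum_card_image c s, ← smul_eq_mul]
    refine (Finset.card_nsmul_le_sum _ (fun b ↦ {x ∈ s | c x = b}.card) k fun b hb ↦
      (Finset.mem_filter.1 hb).2).trans ?_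
    exact Finset.sum_le_sum_of_subset (Finset.filter_subset _ _)
  · by_contra! h
    obtain ⟨x, hx⟩ := Finset.card_pos.1 (lt_of_lt_of_le hk h)
    rw [Finset.mem_filter] at hx
    exact hb (Finset.mem_filter.2 ⟨Finset.mem_image.2 ⟨x, hx⟩, h⟩)

namespace SimpleGraph

variable {V : Type*} [Fintype V] {G : SimpleGraph V}

open Classical in
lemma degree_contract_le {u v : V} (huv : G.Adj u v) {D : ℕ} (hdeg : ∀ w, G.degree w ≤ D)
    (h : G.degree u + G.degree v ≤ D + 2) (w : V) : (G.contract v u).degree w ≤ D := by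
  rw [← card_neighborFinset_eq_degree]
  by_cases hwv : w = v
  · rw [Finset.card_eq_zero.2]
    · exact Nat.zero_le _
    · refine Finset.eq_empty_of_forall_notMem fun y hy ↦ ?_
      rw [mem_neighborFinset] at hy
      exact hy.2.1 hwv
  by_cases hwu : w = u
  · subst hwu
    have hsub : (G.contract v w).neighborFinset w ⊆
        (G.neighborFinset w).erase v ∪ (G.neighborFinset v).erase w := by
      intro y hy
      rw [mem_neighborFinset, contract_adj] at hy
      simp only [Finset.mem_union, Finset.mem_erase, mem_neighborFinset]
      grind
    have h1 := (Finset.card_le_card hsub).trans (Finset.card_union_le _ _)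
    rw [Finset.card_erase_of_mem (by simpa using huv),
      Finset.card_erase_of_mem (by simpa using huv.symm), G.card_neighborFinset_eq_degree,
      G.card_neighborFinset_eq_degree] at h1
    have h2 := (G.degree_pos_iff_exists_adj w).2 ⟨v, huv⟩
    have h3 := (G.degree_pos_iff_exists_adj v).2 ⟨w, huv.symm⟩
    omega
  refine le_trans ?_ (hdeg w)
  rw [← card_neighborFinset_eq_degree]
  by_cases hvw : G.Adj v w
  · have hsub : (G.contract v u).neighborFinset w ⊆ insert u ((G.neighborFinset w).erase v) := by
      intro y hy
      rw [mem_neighborFinset, contract_adj] at hy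
      simp only [Finset.mem_insert, Finset.mem_erase, mem_neighborFinset]
      grind
    have h1 := (Finset.card_le_card hsub).trans (Finset.card_insert_le _ _)
    rwa [Finset.card_erase_add_one (by simpa using hvw.symm)] at h1
  · refine Finset.card_le_card fun y hy ↦ ?_
    rw [mem_neighborFinset, contract_adj] at hy
    rw [mem_neighborFinset]
    grind

open Classical in
/-- A frugal colouring of a contraction extends to the contracted vertex. -/
lemma IsFrugalColoring.update_of_contract {α : Type*} {u v : V} (huv : G.Adj u v) {k : ℕ}
    (hk : 1 ≤ k) {c : V → α} (hc : (G.contract v u).IsFrugalColoring k c) {a : α}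
    (ha : ∀ w, G.Adj v w → a ≠ c w)
    (ha' : ∀ w, G.Adj v w → {x ∈ (G.neighborFinset w).erase v | c x = a}.card < k) :
    G.IsFrugalColoring k (Function.update c v a) := by
  have hadj : ∀ x y, G.Adj x y → x ≠ v → y ≠ v → (G.contract v u).Adj x y :=
    fun x y h hx hy ↦ ⟨h.ne, hx, hy, .inl h⟩
  have hadj' : ∀ y, G.Adj v y → y ≠ u → (G.contract v u).Adj u y :=
    fun y h hy ↦ ⟨hy.symm, huv.ne, h.ne', .inr (.inl ⟨rfl, h⟩)⟩
  refine ⟨fun x y hxy ↦ ?_, fun x b ↦ ?_⟩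
  · by_cases hx : x = v
    · subst hx
      rw [Function.update_self, Function.update_of_ne hxy.ne']
      exact ha y hxy
    by_cases hy : y = v
    · subst hy
      rw [Function.update_self, Function.update_of_ne hxy.ne]
      exact (ha x hxy.symm).symm
    rw [Function.update_of_ne hx, Function.update_of_ne hy]
    exact hc.1 x y (hadj x y hxy hx hy)
  by_cases hx : x = v
  · subst hx
    by_cases hb : b = c u
    · refine le_trans ?_ hk
      rw [← Set.ncard_singleton u]
      refine Set.ncard_le_ncard ?_
      rintro y ⟨hy, hyb⟩
      rw [mem_neighborSet] at hy
      rw [Function.update_of_ne hy.ne', hb] at hyb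
      by_contra hyu
      exact hc.1 u y (hadj' y hy hyu) hyb.symm
    · refine le_trans (Set.ncard_le_ncard ?_) (hc.2 u b)
      rintro y ⟨hy, hyb⟩
      rw [mem_neighborSet] at hy
      rw [Function.update_of_ne hy.ne'] at hyb
      exact ⟨hadj' y hy fun h ↦ hb (by rw [← hyb, h]), hyb⟩
  by_cases hxv : G.Adj v x ∧ b = a
  · obtain ⟨hxv, rfl⟩ := hxv
    have hsub : {y | y ∈ G.neighborSet x ∧ Function.update c v b y = b} ⊆
        (insert v {y ∈ (G.neighborFinset x).erase v | c y = b} : Finset V) := by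
      rintro y ⟨hy, hyb⟩
      by_cases hyv : y = v
      · simp [hyv]
      · rw [Function.update_of_ne hyv] at hyb
        rw [mem_neighborSet] at hy
        simp [hy, hyb, hyv]
    have h1 := Set.ncard_le_ncard hsub
    rw [Set.ncard_coe_finset] at h1
    exact (h1.trans (Finset.card_insert_le _ _)).trans (ha' x hxv)
  · refine le_trans (Set.ncard_le_ncard ?_) (hc.2 x b)
    rintro y ⟨hy, hyb⟩
    rw [mem_neighborSet] at hy
    have hyv : y ≠ v := by
      rintro rfl
      rw [Function.update_self] at hyb
      exact hxv ⟨hy.symm, hyb.symm⟩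
    rw [Function.update_of_ne hyv] at hyb
    exact ⟨hadj x y hy hx hyv, hyb⟩

open Classical in
theorem HasTurnParity.exists_isFrugalColoring {α : Type*} (hG : G.HasTurnParity) {D k : ℕ}
    (hD : 12 ≤ D) (hk : 1 ≤ k) (hdeg : ∀ v, G.degree v ≤ D) (L : V → Finset α)
    (hL : ∀ v, (2 * D + 19) / k + 6 ≤ (L v).card) (S : Finset V)
    (hGS : ∀ u v, G.Adj u v → u ∈ S) :
    ∃ c : V → α, (∀ v, c v ∈ L v) ∧ G.IsFrugalColoring k c := by
  induction hN : S.card using Nat.strong_induction_on generalizing G S with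
  | _ N ih =>
  subst hN
  by_cases hadj : ∃ a b, G.Adj a b
  · obtain ⟨a, b, hab⟩ := hadj
    obtain ⟨v, u, huv, h5, huvD, hsum⟩ := hG.exists_reducible hab hD hdeg
    obtain ⟨c, hcL, hc⟩ := ih _ (Finset.card_erase_lt_of_mem (hGS v u huv.symm)) (hG.contract huv)
      (degree_contract_le huv hdeg huvD) (S.erase v) (contract_mem_erase hGS huv) rfl
    choose F hFcard hF using fun w ↦
      ((G.neighborFinset w).erase v).exists_card_mul_le_card_fiber_lt c hk
    have hbad : ((G.neighborFinset v).biUnion F).card ≤ (2 * D + 19) / k := by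
      refine Finset.card_biUnion_le.trans ?_
      rw [Nat.le_div_iff_mul_le hk, Finset.sum_mul]
      refine le_trans (Finset.sum_le_sum fun w hw ↦ ?_) hsum
      rw [mem_neighborFinset] at hw
      refine (hFcard w).trans ?_
      rw [Finset.card_erase_of_mem (by simpa using hw.symm), card_neighborFinset_eq_degree]
    have hlt : ((G.neighborFinset v).image c ∪ (G.neighborFinset v).biUnion F).card <
        (L v).card := by
      have h1 := Finset.card_union_le ((G.neighborFinset v).image c)
        ((G.neighborFinset v).biUnion F)
      have h2 : ((G.neighborFinset v).image c).card ≤ (G.neighborFinset v).card :=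
        Finset.card_image_le
      rw [card_neighborFinset_eq_degree] at h2
      have := hL v
      omega
    obtain ⟨x, hxL, hx⟩ := Finset.exists_mem_notMem_of_card_lt_card hlt
    simp only [Finset.mem_union, Finset.mem_image, Finset.mem_biUnion, mem_neighborFinset, not_or,
      not_exists, not_and] at hx
    refine ⟨Function.update c v x, fun w ↦ ?_, hc.update_of_contract huv hk
      (fun w hw h ↦ hx.1 w hw h.symm) fun w hw ↦ hF w x (hx.2 w hw)⟩
    by_cases hw : w = v
    · subst hw
      rwa [Function.update_self]
    · rw [Function.update_of_ne hw]
      exact hcL w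
  · have hne : ∀ v, (L v).Nonempty := fun v ↦ Finset.card_pos.1
      ((Nat.succ_pos _).trans_le (hL v))
    choose c hc using hne
    refine ⟨c, hc, fun u v h ↦ absurd ⟨u, v, h⟩ hadj, fun v a ↦ ?_⟩
    have hempty : {u | u ∈ G.neighborSet v ∧ c u = a} = ∅ :=
      Set.eq_empty_of_forall_notMem fun u hu ↦ hadj ⟨v, u, hu.1⟩
    rw [hempty, Set.ncard_empty]
    exact Nat.zero_le k

end SimpleGraph

/-- For any planar graph `G` with `Δ(G) ≥ 12` and `k ≥ 1`,
`ch_k(G) ≤ ⌊(2Δ(G) + 19)/k⌋ + 6`. -/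
theorem frugalChoiceNumber_planar_le {V : Type*} [Fintype V] (G : SimpleGraph V)
    [DecidableRel G.Adj] (hG : G.IsPlanar) (hΔ : 12 ≤ G.maxDegree) (k : ℕ) (hk : 1 ≤ k) :
    G.frugalChoiceNumber k ≤ (2 * G.maxDegree + 19) / k + 6 := by
  refine Nat.sInf_le fun L hL ↦ ?_
  refine hG.hasTurnParity.exists_isFrugalColoring hΔ hk (fun v ↦ ?_) L (fun v ↦ (hL v).ge)
    Finset.univ fun _ _ _ ↦ Finset.mem_univ _
  convert G.degree_le_maxDegree v
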